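/- The number |𝒜̄ₙ| of isomorphism classes of arithmetic expressions with exactly the variables x₁, …, xₙ equals 1, 4, 18, 93, 500, 2844 for n = 1, 2, 3, 4, 5, 6 respectively. -/

import Mathlib

/- Common framework: `K = ℝ(x₁,x₂,…)` is the field of rational functions over `ℝ` in
countably many variables (the fraction field of `MvPolynomial ℕ ℝ`), arithmetic
expressions, the permutation action, isomorphism, types, the `EndsWith` classification,
multilinear forms and monicity, isomorphism classes and their counting. -/

open MvPolynomial

noncomputable section

abbrev P : Type := MvPolynomial ℕ ℝ
abbrev K : Type := FractionRing P

def toK : P →+* K := algebraMap P K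

/-- The variable `xᵢ`, as an element of `K`. -/
def Xv (i : ℕ) : K := toK (X i)

/-- `Vars f` : the set of variables on which `f` depends, i.e. the variables occurring in a
representation of `f` as a quotient of two coprime polynomials. -/
def Vars (f : K) : Set ℕ :=
  {i | ∃ p q : P, q ≠ 0 ∧ IsRelPrime p q ∧ f = toK p / toK q ∧ (i ∈ p.vars ∨ i ∈ q.vars)}

/-- `𝒜` : the smallest subset of `K` containing every variable and closed under the four
binary operations applied to expressions with disjoint variable sets. -/
inductive IsAE : K → Prop
  | var (i : ℕ) : IsAE (Xv i)
  | add {g h : K} : IsAE g → IsAE h → Disjoint (Vars g) (Vars h) → IsAE (g + h)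
  | sub {g h : K} : IsAE g → IsAE h → Disjoint (Vars g) (Vars h) → IsAE (g - h)
  | mul {g h : K} : IsAE g → IsAE h → Disjoint (Vars g) (Vars h) → IsAE (g * h)
  | div {g h : K} : IsAE g → IsAE h → Disjoint (Vars g) (Vars h) → IsAE (g / h)

/-- The action `σ·f` of a permutation of the variables on `K`, substituting `σ(xᵢ)` for `xᵢ`. -/
def permAct (σ : Equiv.Perm ℕ) : K ≃+* K :=
  IsFractionRing.ringEquivOfRingEquiv (renameEquiv ℝ σ).toRingEquiv

/-- `f ≅ g` : `f` and `g` are isomorphic, i.e. differ by a permutation of the variables. -/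
def Iso (f g : K) : Prop := ∃ σ : Equiv.Perm ℕ, permAct σ f = g

/-- First type: `-f ∉ 𝒜`. -/
def FirstType (f : K) : Prop := IsAE f ∧ ¬ IsAE (-f)

/-- Second type: `-f ∈ 𝒜` but `f ≇ -f`. -/
def SecondType (f : K) : Prop := IsAE f ∧ IsAE (-f) ∧ ¬ Iso f (-f)

/-- Third type: `-f ∈ 𝒜` and `f ≅ -f`. -/
def ThirdType (f : K) : Prop := IsAE f ∧ IsAE (-f) ∧ Iso f (-f)

/-- The four binary operators. -/
inductive Op : Type
  | add | sub | mul | div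
deriving DecidableEq

/-- `EndsWith f o` : the arithmetic expression `f` ends with the operator `o`. -/
inductive EndsWith : K → Op → Prop
  | var (i : ℕ) : EndsWith (Xv i) Op.mul
  | add_base {i j : ℕ} (hij : i ≠ j) : EndsWith (Xv i + Xv j) Op.add
  | sub_base {i j : ℕ} (hij : i ≠ j) : EndsWith (Xv i - Xv j) Op.sub
  | mul_base {i j : ℕ} (hij : i ≠ j) : EndsWith (Xv i * Xv j) Op.mul
  | div_base {i j : ℕ} (hij : i ≠ j) : EndsWith (Xv i / Xv j) Op.div
  | add_rec {g h : K} {o₁ o₂ : Op} : IsAE g → IsAE h → Disjoint (Vars g) (Vars h) →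
      3 ≤ (Vars (g + h)).ncard → o₁ ≠ Op.sub → o₂ ≠ Op.sub →
      EndsWith g o₁ → EndsWith h o₂ → EndsWith (g + h) Op.add
  | mul_rec {g h : K} {o₁ o₂ : Op} : IsAE g → IsAE h → Disjoint (Vars g) (Vars h) →
      3 ≤ (Vars (g * h)).ncard → o₁ ≠ Op.div → o₂ ≠ Op.div →
      EndsWith g o₁ → EndsWith h o₂ → EndsWith (g * h) Op.mul
  | div_rec {g h : K} {o₁ o₂ : Op} : IsAE g → IsAE h → Disjoint (Vars g) (Vars h) →
      3 ≤ (Vars (g / h)).ncard → o₁ ≠ Op.div → o₂ ≠ Op.div →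
      EndsWith g o₁ → EndsWith h o₂ → EndsWith (g / h) Op.div
  | sub_rec {g h : K} {o₁ o₂ : Op} : IsAE g → IsAE h → Disjoint (Vars g) (Vars h) →
      3 ≤ (Vars (g - h)).ncard → o₁ ≠ Op.sub → o₂ ≠ Op.sub → FirstType h →
      EndsWith g o₁ → EndsWith h o₂ → EndsWith (g - h) Op.sub

/-- `f` ends with one of the operators in `s`. -/
def EndsIn (f : K) (s : Set Op) : Prop := ∃ o ∈ s, EndsWith f o

/-- The binary operation on `K` corresponding to an operator. -/
def applyOp (o : Op) (a b : K) : K :=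
  match o with
  | Op.add => a + b
  | Op.sub => a - b
  | Op.mul => a * b
  | Op.div => a / b

/-- The variable index set `{1, …, n}` (for the variables `x₁, …, xₙ`). -/
def varsUpTo (n : ℕ) : Set ℕ := {i | 1 ≤ i ∧ i ≤ n}

/-- `𝒜ₙ` : arithmetic expressions whose variable set is exactly `{x₁, …, xₙ}`. -/
def AEn (n : ℕ) : Set K := {f | IsAE f ∧ Vars f = varsUpTo n}

/-- A multilinear polynomial: degree at most `1` in each variable. -/
def Multilinear (p : P) : Prop := ∀ i : ℕ, p.degreeOf i ≤ 1

/-- The key of a (multilinear) monomial: the sorted list of variables occurring in it;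
keys are compared in the lexicographic order on lists. -/
def monKey (m : ℕ →₀ ℕ) : List ℕ := m.support.sort (· ≤ ·)

/-- A (multilinear) polynomial is monic if the coefficient of its lexicographically
leading (i.e. first) monomial is positive. -/
def MonicML (p : P) : Prop :=
  ∃ m ∈ p.support, 0 < p.coeff m ∧ ∀ m' ∈ p.support, monKey m ≤ monKey m'

/-- `MLForm f F₁ F₂` : `F₁ / F₂` is the multilinear form of `f`: `F₁, F₂` are coprime
multilinear polynomials, `F₂` is monic, and `f = F₁ / F₂`. -/
def MLForm (f : K) (F₁ F₂ : P) : Prop :=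
  Multilinear F₁ ∧ Multilinear F₂ ∧ IsRelPrime F₁ F₂ ∧ F₂ ≠ 0 ∧ MonicML F₂ ∧
    f = toK F₁ / toK F₂

/-- A monic arithmetic expression: the numerator of its multilinear form is monic as well. -/
def MonicAE (f : K) : Prop := ∃ F₁ F₂ : P, MLForm f F₁ F₂ ∧ MonicML F₁

/-- The isomorphism class of `f`. -/
def classOf (f : K) : Set K := {g | Iso f g}

/-- `S̄` : the set of isomorphism classes of elements of `S`. -/
def classes (S : Set K) : Set (Set K) := classOf '' S

/-- `|S̄|` : the number of isomorphism classes of elements of `S`. -/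
def countClasses (S : Set K) : ℕ := (classes S).ncard

/-- The number of isomorphism classes of elements of `S` depending on exactly `k` variables. -/
def gradeCount (S : Set K) (k : ℕ) : ℕ := countClasses {f ∈ S | (Vars f).ncard = k}

/-- `ω_n` for a graded family having `N k` elements in grade `k` : the sum over all
partitions `(k₁^{m₁},…,k_s^{m_s})` of `n` of `∏ⱼ C(N kⱼ + mⱼ - 1, mⱼ)`. -/
def omega (N : ℕ → ℕ) (n : ℕ) : ℕ :=
  ∑ p : n.Partition,
    ∏ k ∈ p.parts.toFinset, Nat.choose (N k + p.parts.count k - 1) (p.parts.count k)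

/-- `ω_n′` : the same sum restricted to non-trivial partitions, i.e. `ω_n - N n`. -/
def omega' (N : ℕ → ℕ) (n : ℕ) : ℕ := omega N n - N n

/-- `𝒜(s)` : arithmetic expressions ending with one of the operators in `s`. -/
def Aset (s : Set Op) : Set K := {f | IsAE f ∧ EndsIn f s}

/-- `ℱ(s)` : first-type arithmetic expressions ending with one of the operators in `s`. -/
def Fset (s : Set Op) : Set K := {f | FirstType f ∧ EndsIn f s}

/-- `ℬ(s)` : second-type arithmetic expressions ending with one of the operators in `s`. -/
def Bset (s : Set Op) : Set K := {f | SecondType f ∧ EndsIn f s}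

/-- `𝒞(s)` : third-type arithmetic expressions ending with one of the operators in `s`. -/
def Cset (s : Set Op) : Set K := {f | ThirdType f ∧ EndsIn f s}

/-- `ℳℬ(s)` : monic second-type arithmetic expressions ending with an operator in `s`. -/
def MBset (s : Set Op) : Set K := {f | SecondType f ∧ MonicAE f ∧ EndsIn f s}

/-!
Operations on representatives with disjoint variables make the set of isomorphism classes a
commutative monoid under addition and under multiplication, compatible with negation and inversion.
Hence a class is described by an expression without variable names, and the classes with `n + 1`
variables are the values of the four operations on pairs of classes with fewer variables, `n + 1`
in total. Bringing the expressions to a normal form after each operation lists these classes.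

To see that no class is listed twice, let the variables be independent random variables with given
moments and write an expression in lowest terms as `p / q`. The five numbers
`E[p ^ j * q ^ (4 - j)]` are determined by the isomorphism class up to a common positive factor, and
are computed along the operations by the binomial theorem. A finite computation shows that their
ratios separate the normal forms with at most six variables.
-/

/-! ### Polynomials and their variables -/

section Polynomial

variable {σ τ R : Type*}

theorem vars_rename_of_injective [CommSemiring R] [DecidableEq τ] {e : σ → τ}
    (he : Function.Injective e) (p : MvPolynomial σ R) : (rename e p).vars = p.vars.image e := by
  classical
  rw [vars_def, vars_def, degrees_rename_of_injective he, Multiset.toFinset_map]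

theorem rename_congr_vars [CommSemiring R] {e e' : σ → τ} {p : MvPolynomial σ R}
    (h : ∀ i ∈ p.vars, e i = e' i) : rename e p = rename e' p :=
  hom_congr_vars (f₁ := (rename e : _ →ₐ[R] MvPolynomial τ R).toRingHom)
    (f₂ := (rename e' : _ →ₐ[R] MvPolynomial τ R).toRingHom) (by ext; simp)
    (fun i hi _ => by simp [h i hi]) rfl

theorem vars_subset_of_dvd [CommSemiring R] [NoZeroDivisors R] {p q : MvPolynomial σ R}
    (h : p ∣ q) (hq : q ≠ 0) : p.vars ⊆ q.vars := by
  obtain ⟨r, rfl⟩ := h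
  intro i hi
  rw [mem_vars_iff_degreeOf_ne_zero] at hi ⊢
  rw [degreeOf_mul_eq (left_ne_zero_of_mul hq) (right_ne_zero_of_mul hq)]
  omega

theorem isRelPrime_of_disjoint_vars {k : Type*} [Field k] {p q : MvPolynomial σ k}
    (hp : p ≠ 0) (hq : q ≠ 0) (h : Disjoint p.vars q.vars) : IsRelPrime p q := by
  intro d hdp hdq
  have hd : d.vars = ∅ := Finset.subset_empty.1 <|
    h (vars_subset_of_dvd hdp hp) (vars_subset_of_dvd hdq hq)
  obtain ⟨c, rfl⟩ : ∃ c, d = C c := ⟨_, vars_eq_empty_iff_eq_C.1 hd⟩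
  have hc : c ≠ 0 := by
    rintro rfl
    exact hp (zero_dvd_iff.1 (by simpa using hdp))
  exact (isUnit_iff_ne_zero.2 hc).map C

end Polynomial

/-! ### Reduced representations -/

/-- `f = p / q` in lowest terms, as in the definition of `Vars`. -/
structure IsReducedRep (f : K) (p q : P) : Prop where
  den_ne_zero : q ≠ 0
  isRelPrime : IsRelPrime p q
  eq_div : f = toK p / toK q

theorem toK_inj {p q : P} : toK p = toK q ↔ p = q :=
  (IsFractionRing.injective P K).eq_iff

theorem toK_ne_zero {p : P} (hp : p ≠ 0) : toK p ≠ 0 := by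
  rwa [← map_zero toK, Ne, toK_inj]

theorem exists_isReducedRep (f : K) : ∃ p q, IsReducedRep f p q :=
  ⟨IsFractionRing.num P f, IsFractionRing.den P f, nonZeroDivisors.coe_ne_zero _,
    IsFractionRing.num_den_reduced P f, (IsFractionRing.mk'_num_den' P f).symm⟩

namespace IsReducedRep

variable {f g : K} {p q r s : P}

theorem unique (h : IsReducedRep f p q) (h' : IsReducedRep f r s) :
    ∃ c : ℝ, c ≠ 0 ∧ r = C c * p ∧ s = C c * q := by
  have hcross : p * s = r * q := by
    have := h.eq_div.symm.trans h'.eq_div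
    rw [div_eq_div_iff (toK_ne_zero h.den_ne_zero) (toK_ne_zero h'.den_ne_zero),
      ← map_mul, ← map_mul] at this
    exact toK_inj.1 this
  have hqs : q ∣ s := h.isRelPrime.symm.dvd_of_dvd_mul_left (hcross ▸ Dvd.intro_left _ rfl)
  have hsq : s ∣ q := h'.isRelPrime.symm.dvd_of_dvd_mul_left (hcross ▸ Dvd.intro_left _ rfl)
  obtain ⟨u, rfl⟩ := associated_of_dvd_dvd hqs hsq
  obtain ⟨c, hc, hu⟩ := isUnit_iff_eq_C_of_isReduced.1 u.isUnit
  rw [hu] at hcross ⊢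
  refine ⟨c, hc.ne_zero, mul_right_cancel₀ h.den_ne_zero ?_, mul_comm _ _⟩
  rw [← hcross]
  ring

theorem vars_eq (h : IsReducedRep f p q) : Vars f = ↑(p.vars ∪ q.vars) := by
  ext i
  rw [Finset.mem_coe, Finset.mem_union]
  refine ⟨?_, fun hi => ⟨p, q, h.1, h.2, h.3, hi⟩⟩
  rintro ⟨r, s, h1, h2, h3, hi⟩
  obtain ⟨c, hc, rfl, rfl⟩ := h.unique ⟨h1, h2, h3⟩
  rwa [vars_C_mul _ hc, vars_C_mul _ hc] at hi

theorem disjoint (h : IsReducedRep f p q) (h' : IsReducedRep g r s)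
    (hd : Disjoint (Vars f) (Vars g)) : Disjoint (p.vars ∪ q.vars) (r.vars ∪ s.vars) := by
  rw [h.vars_eq, h'.vars_eq] at hd
  exact_mod_cast hd

theorem num_ne_zero (h : IsReducedRep f p q) (hf : f ≠ 0) : p ≠ 0 := by
  rintro rfl
  exact hf (by rw [h.eq_div, map_zero, zero_div])

protected theorem var (i : ℕ) : IsReducedRep (Xv i) (X i) 1 :=
  ⟨one_ne_zero, isRelPrime_one_right, by rw [map_one, div_one]; rfl⟩

protected theorem neg (h : IsReducedRep f p q) : IsReducedRep (-f) (-p) q :=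
  ⟨h.den_ne_zero, h.isRelPrime.neg_left, by rw [h.eq_div, map_neg, neg_div]⟩

protected theorem inv (h : IsReducedRep f p q) (hf : f ≠ 0) : IsReducedRep f⁻¹ q p :=
  ⟨h.num_ne_zero hf, h.isRelPrime.symm, by rw [h.eq_div, inv_div]⟩

protected theorem mul (h : IsReducedRep f p q) (h' : IsReducedRep g r s) (hf : f ≠ 0)
    (hg : g ≠ 0) (hd : Disjoint (Vars f) (Vars g)) :
    IsReducedRep (f * g) (p * r) (q * s) := by
  have hd' := h.disjoint h' hd
  simp only [Finset.disjoint_union_left, Finset.disjoint_union_right] at hd'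
  obtain ⟨⟨-, hqr⟩, hps, -⟩ := hd'
  refine ⟨mul_ne_zero h.den_ne_zero h'.den_ne_zero, ?_, ?_⟩
  · refine (h.isRelPrime.mul_right ?_).mul_left (.mul_right ?_ h'.isRelPrime)
    · exact isRelPrime_of_disjoint_vars (h.num_ne_zero hf) h'.den_ne_zero hps
    · exact isRelPrime_of_disjoint_vars (h'.num_ne_zero hg) h.den_ne_zero hqr.symm
  · rw [h.eq_div, h'.eq_div, map_mul, map_mul, div_mul_div_comm]

protected theorem add (h : IsReducedRep f p q) (h' : IsReducedRep g r s)
    (hd : Disjoint (Vars f) (Vars g)) : IsReducedRep (f + g) (p * s + q * r) (q * s) := by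
  have hd' := h.disjoint h' hd
  simp only [Finset.disjoint_union_left, Finset.disjoint_union_right] at hd'
  have hqs : IsRelPrime q s :=
    isRelPrime_of_disjoint_vars h.den_ne_zero h'.den_ne_zero hd'.2.2
  refine ⟨mul_ne_zero h.den_ne_zero h'.den_ne_zero, .mul_right ?_ ?_, ?_⟩
  · exact (h.isRelPrime.mul_left hqs.symm).add_mul_left_left _
  · rw [add_comm, mul_comm p]
    exact (hqs.mul_left h'.isRelPrime).add_mul_left_left _
  · rw [h.eq_div, h'.eq_div, map_mul, map_add, map_mul, map_mul,
      div_add_div _ _ (toK_ne_zero h.den_ne_zero) (toK_ne_zero h'.den_ne_zero)]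

end IsReducedRep

theorem Vars_finite (f : K) : (Vars f).Finite := by
  obtain ⟨p, q, h⟩ := exists_isReducedRep f
  rw [h.vars_eq]
  exact Finset.finite_toSet _

theorem Vars_Xv (i : ℕ) : Vars (Xv i) = {i} := by
  simp [(IsReducedRep.var i).vars_eq]

theorem Vars_zero : Vars 0 = ∅ := by
  have h : IsReducedRep 0 0 1 := ⟨one_ne_zero, isRelPrime_one_right, by simp⟩
  simp [h.vars_eq]

theorem Vars_one : Vars 1 = ∅ := by
  have h : IsReducedRep 1 1 1 := ⟨one_ne_zero, isRelPrime_one_right, by simp⟩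
  simp [h.vars_eq]

theorem ne_zero_of_Vars_nonempty {f : K} (hf : (Vars f).Nonempty) : f ≠ 0 := by
  rintro rfl
  exact hf.ne_empty Vars_zero

theorem Vars_neg (f : K) : Vars (-f) = Vars f := by
  obtain ⟨p, q, h⟩ := exists_isReducedRep f
  rw [h.vars_eq, h.neg.vars_eq, vars_neg]

theorem Vars_inv (f : K) : Vars f⁻¹ = Vars f := by
  obtain rfl | hf := eq_or_ne f 0
  · rw [inv_zero]
  obtain ⟨p, q, h⟩ := exists_isReducedRep f
  rw [h.vars_eq, (h.inv hf).vars_eq, Finset.union_comm]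

/-! ### The permutation action -/

theorem permAct_toK (σ : Equiv.Perm ℕ) (p : P) : permAct σ (toK p) = toK (rename σ p) :=
  IsFractionRing.ringEquivOfRingEquiv_algebraMap (K := K) (L := K)
    (renameEquiv ℝ σ).toRingEquiv p

theorem permAct_Xv (σ : Equiv.Perm ℕ) (i : ℕ) : permAct σ (Xv i) = Xv (σ i) := by
  rw [Xv, permAct_toK, rename_X]; rfl

theorem permAct_one (f : K) : permAct 1 f = f := by
  obtain ⟨p, q, h⟩ := exists_isReducedRep f
  simp [h.eq_div, permAct_toK, rename_id]

theorem permAct_permAct (σ τ : Equiv.Perm ℕ) (f : K) :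
    permAct σ (permAct τ f) = permAct (σ * τ) f := by
  obtain ⟨p, q, h⟩ := exists_isReducedRep f
  simp only [h.eq_div, map_div₀, permAct_toK, rename_rename, Equiv.Perm.coe_mul]

theorem permAct_congr {σ τ : Equiv.Perm ℕ} {f : K} (h : ∀ i ∈ Vars f, σ i = τ i) :
    permAct σ f = permAct τ f := by
  obtain ⟨p, q, hr⟩ := exists_isReducedRep f
  simp only [hr.vars_eq, Finset.mem_coe, Finset.mem_union] at h
  simp only [hr.eq_div, map_div₀, permAct_toK]
  rw [rename_congr_vars fun i hi => h i (.inl hi), rename_congr_vars fun i hi => h i (.inr hi)]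

theorem IsReducedRep.permAct {f : K} {p q : P} (h : IsReducedRep f p q) (σ : Equiv.Perm ℕ) :
    IsReducedRep (permAct σ f) (rename σ p) (rename σ q) where
  den_ne_zero := (map_ne_zero_iff _ (rename_injective σ σ.injective)).2 h.den_ne_zero
  isRelPrime := .of_map (renameEquiv ℝ σ).symm <| by
    have hinv (r : P) : (renameEquiv ℝ σ).symm (rename σ r) = r :=
      (renameEquiv ℝ σ).symm_apply_apply r
    rw [hinv, hinv]
    exact h.isRelPrime
  eq_div := by simp only [h.eq_div, map_div₀, permAct_toK]

theorem Vars_permAct (σ : Equiv.Perm ℕ) (f : K) : Vars (permAct σ f) = σ '' Vars f := by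
  obtain ⟨p, q, h⟩ := exists_isReducedRep f
  rw [h.vars_eq, (h.permAct σ).vars_eq, vars_rename_of_injective σ.injective,
    vars_rename_of_injective σ.injective, ← Finset.image_union, Finset.coe_image]

/-- Reduces questions about variables to equations between rational functions, by swapping `i` with
a fresh variable `j`. -/
theorem notMem_Vars_iff_permAct_swap {f : K} {i j : ℕ} (hj : j ∉ Vars f) :
    i ∉ Vars f ↔ permAct (Equiv.swap i j) f = f := by
  constructor
  · intro hi
    conv_rhs => rw [← permAct_one f]
    exact permAct_congr fun k hk =>
      Equiv.swap_apply_of_ne_of_ne (fun h => hi (h ▸ hk)) (fun h => hj (h ▸ hk))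
  · intro h hi
    rw [← h, Vars_permAct] at hj
    exact hj ⟨i, hi, Equiv.swap_apply_left i j⟩

theorem exists_perm_eqOn {α : Type*} {s : Set α} (hs : s.Finite) {φ : α → α}
    (hφ : s.InjOn φ) : ∃ σ : Equiv.Perm α, s.EqOn σ φ := by
  have := hs.to_subtype
  obtain ⟨σ, hσ⟩ := Equiv.Perm.exists_extending_pair (Subtype.val : s → α) (φ ∘ Subtype.val)
    Subtype.val_injective hφ.injective
  exact ⟨σ, fun i hi => hσ ⟨i, hi⟩⟩

theorem exists_perm_image_eq {α : Type*} [Nonempty α] {s t : Set α} (hs : s.Finite)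
    (ht : t.Finite) (h : s.ncard = t.ncard) : ∃ σ : Equiv.Perm α, σ '' s = t := by
  obtain ⟨φ, hφ⟩ := hs.exists_bijOn_of_encard_eq (t := t)
    (by rw [← hs.cast_ncard_eq, ← ht.cast_ncard_eq, h])
  obtain ⟨σ, hσ⟩ := exists_perm_eqOn hs hφ.injOn
  exact ⟨σ, hσ.image_eq.trans hφ.image_eq⟩

theorem exists_disjoint_Vars_permAct (f g : K) :
    ∃ σ, Disjoint (Vars f) (Vars (permAct σ g)) := by
  obtain ⟨N, hN⟩ := (Vars_finite f).bddAbove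
  obtain ⟨σ, hσ⟩ := exists_perm_eqOn (Vars_finite g) (φ := (· + (N + 1)))
    (add_left_injective _).injOn
  refine ⟨σ, Set.disjoint_left.2 fun i hi hi' => ?_⟩
  rw [Vars_permAct, hσ.image_eq] at hi'
  obtain ⟨j, -, rfl⟩ := hi'
  have : j + (N + 1) ≤ N := hN hi
  omega

theorem exists_permAct_eq_and_permAct_eq {f g : K} {σ τ : Equiv.Perm ℕ}
    (hd : Disjoint (Vars f) (Vars g)) (hd' : Disjoint (Vars (permAct σ f)) (Vars (permAct τ g))) :
    ∃ ρ, permAct ρ f = permAct σ f ∧ permAct ρ g = permAct τ g := by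
  classical
  rw [Vars_permAct, Vars_permAct] at hd'
  have hf : (Vars f).EqOn ((Vars f).piecewise σ τ) σ := Set.piecewise_eqOn _ _ _
  have hg : (Vars g).EqOn ((Vars f).piecewise σ τ) τ :=
    (Set.piecewise_eqOn_compl _ _ _).mono hd.subset_compl_left
  have hinj : (Vars f ∪ Vars g).InjOn ((Vars f).piecewise σ τ) := by
    rw [Set.injOn_union hd]
    refine ⟨σ.injective.injOn.congr hf.symm, τ.injective.injOn.congr hg.symm, ?_⟩
    intro i hi j hj
    rw [hf hi, hg hj]
    exact hd'.ne_of_mem ⟨i, hi, rfl⟩ ⟨j, hj, rfl⟩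
  obtain ⟨ρ, hρ⟩ := exists_perm_eqOn ((Vars_finite f).union (Vars_finite g)) hinj
  exact ⟨ρ, permAct_congr fun i hi => (hρ (.inl hi)).trans (hf hi),
    permAct_congr fun i hi => (hρ (.inr hi)).trans (hg hi)⟩

/-! ### Variables of compound expressions -/

/-- A binary operation on `K` that commutes with renaming the variables, such as each of the four
arithmetic operations. -/
def IsEquivariant (op : K → K → K) : Prop :=
  ∀ σ f g, permAct σ (op f g) = op (permAct σ f) (permAct σ g)

theorem isEquivariant_add : IsEquivariant (· + ·) := fun σ => map_add (permAct σ)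

theorem isEquivariant_mul : IsEquivariant (· * ·) := fun σ => map_mul (permAct σ)

theorem Vars_op_subset {op : K → K → K} (hop : IsEquivariant op) (f g : K) :
    Vars (op f g) ⊆ Vars f ∪ Vars g := by
  intro i hi
  obtain ⟨j, hj⟩ :=
    (((Vars_finite f).union (Vars_finite g)).union (Vars_finite (op f g))).exists_notMem
  simp only [Set.mem_union, not_or] at hj
  obtain ⟨⟨hjf, hjg⟩, hj⟩ := hj
  contrapose! hi
  rw [Set.mem_union, not_or, notMem_Vars_iff_permAct_swap hjf,
    notMem_Vars_iff_permAct_swap hjg] at hi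
  rw [notMem_Vars_iff_permAct_swap hj, hop, hi.1, hi.2]

theorem Vars_op_eq {op : K → K → K} (hop : IsEquivariant op) {f g : K}
    (hf : ∀ f', op f' g = op f g → f' = f) (hg : ∀ g', op f g' = op f g → g' = g)
    (hd : Disjoint (Vars f) (Vars g)) : Vars (op f g) = Vars f ∪ Vars g := by
  refine (Vars_op_subset hop f g).antisymm fun i hi => ?_
  obtain ⟨j, hj⟩ :=
    (((Vars_finite f).union (Vars_finite g)).union (Vars_finite (op f g))).exists_notMem
  simp only [Set.mem_union, not_or] at hj
  obtain ⟨⟨hjf, hjg⟩, hj⟩ := hj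
  by_contra hi'
  rw [notMem_Vars_iff_permAct_swap hj, hop] at hi'
  rcases hi with hi | hi
  · have hig := (notMem_Vars_iff_permAct_swap hjg).1 (Set.disjoint_left.1 hd hi)
    rw [hig] at hi'
    exact (notMem_Vars_iff_permAct_swap hjf).2 (hf _ hi') hi
  · have hif := (notMem_Vars_iff_permAct_swap hjf).1 (Set.disjoint_right.1 hd hi)
    rw [hif] at hi'
    exact (notMem_Vars_iff_permAct_swap hjg).2 (hg _ hi') hi

section Operations

variable {f g : K}

theorem Vars_add (hd : Disjoint (Vars f) (Vars g)) : Vars (f + g) = Vars f ∪ Vars g :=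
  Vars_op_eq isEquivariant_add (fun _ => add_right_cancel) (fun _ => add_left_cancel) hd

theorem Vars_sub (hd : Disjoint (Vars f) (Vars g)) : Vars (f - g) = Vars f ∪ Vars g := by
  rw [sub_eq_add_neg, Vars_add (by rwa [Vars_neg]), Vars_neg]

theorem Vars_mul (hf : f ≠ 0) (hg : g ≠ 0) (hd : Disjoint (Vars f) (Vars g)) :
    Vars (f * g) = Vars f ∪ Vars g :=
  Vars_op_eq isEquivariant_mul (fun _ => mul_right_cancel₀ hg) (fun _ => mul_left_cancel₀ hf) hd

theorem Vars_div (hf : f ≠ 0) (hg : g ≠ 0) (hd : Disjoint (Vars f) (Vars g)) :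
    Vars (f / g) = Vars f ∪ Vars g := by
  rw [div_eq_mul_inv, Vars_mul hf (inv_ne_zero hg) (by rwa [Vars_inv]), Vars_inv]

end Operations

theorem IsAE.permAct {f : K} (hf : IsAE f) (σ : Equiv.Perm ℕ) : IsAE (permAct σ f) := by
  have hdisj {g h : K} (hd : Disjoint (Vars g) (Vars h)) :
      Disjoint (Vars (_root_.permAct σ g)) (Vars (_root_.permAct σ h)) := by
    rw [Vars_permAct, Vars_permAct]
    exact (Set.disjoint_image_iff σ.injective).2 hd
  induction hf with
  | var i => rw [permAct_Xv]; exact .var _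
  | add _ _ hd ihg ihh => rw [map_add]; exact .add ihg ihh (hdisj hd)
  | sub _ _ hd ihg ihh => rw [map_sub]; exact .sub ihg ihh (hdisj hd)
  | mul _ _ hd ihg ihh => rw [map_mul]; exact .mul ihg ihh (hdisj hd)
  | div _ _ hd ihg ihh => rw [map_div₀]; exact .div ihg ihh (hdisj hd)

theorem Iso.refl (f : K) : Iso f f := ⟨1, permAct_one f⟩

theorem Iso.symm {f g : K} : Iso f g → Iso g f := by
  rintro ⟨σ, rfl⟩
  exact ⟨σ⁻¹, by rw [permAct_permAct, inv_mul_cancel, permAct_one]⟩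

theorem Iso.trans {f g h : K} : Iso f g → Iso g h → Iso f h := by
  rintro ⟨σ, rfl⟩ ⟨τ, rfl⟩
  exact ⟨τ * σ, (permAct_permAct τ σ f).symm⟩

/-! ### Arithmetic of isomorphism classes -/

/-- Isomorphism of rational functions, as an equivalence relation. -/
def isoSetoid : Setoid K := ⟨Iso, .refl, .symm, .trans⟩

/-- The isomorphism classes of rational functions. The arithmetic operations on them are the ones
induced by the operations of `K` on representatives with disjoint sets of variables. -/
def IsoClass : Type := Quotient isoSetoid

namespace IsoClass

/-- The isomorphism class of a rational function. -/
def mk (f : K) : IsoClass := Quotient.mk isoSetoid f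

theorem mk_eq_mk {f g : K} : mk f = mk g ↔ Iso f g := Quotient.eq (r := isoSetoid)

theorem exists_mk_eq (a : IsoClass) : ∃ f, mk f = a := Quotient.exists_rep a

theorem mk_permAct (σ : Equiv.Perm ℕ) (f : K) : mk (permAct σ f) = mk f :=
  mk_eq_mk.2 (Iso.symm ⟨σ, rfl⟩)

theorem mk_eq_mk_zero {f : K} : mk f = mk 0 ↔ f = 0 := by
  refine ⟨fun h => ?_, congrArg mk⟩
  obtain ⟨σ, hσ⟩ := mk_eq_mk.1 h
  exact (map_eq_zero (permAct σ)).1 hσ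

theorem mk_eq_mk_one {f : K} : mk f = mk 1 ↔ f = 1 := by
  refine ⟨fun h => ?_, congrArg mk⟩
  obtain ⟨σ, hσ⟩ := mk_eq_mk.1 h
  exact (map_eq_one_iff (permAct σ) (permAct σ).injective).1 hσ

theorem exists_disjoint (a b : IsoClass) :
    ∃ f g, mk f = a ∧ mk g = b ∧ Disjoint (Vars f) (Vars g) := by
  obtain ⟨f, rfl⟩ := a.exists_mk_eq
  obtain ⟨g, rfl⟩ := b.exists_mk_eq
  obtain ⟨σ, hd⟩ := exists_disjoint_Vars_permAct f g
  exact ⟨f, permAct σ g, rfl, mk_permAct σ g, hd⟩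

theorem ind₂ {motive : IsoClass → IsoClass → Prop}
    (mk : ∀ f g, Disjoint (Vars f) (Vars g) → motive (mk f) (mk g)) (a b : IsoClass) :
    motive a b := by
  obtain ⟨f, g, rfl, rfl, hd⟩ := exists_disjoint a b
  exact mk f g hd

theorem ind₃ {motive : IsoClass → IsoClass → IsoClass → Prop}
    (mk : ∀ f g h, Disjoint (Vars f) (Vars g) → Disjoint (Vars f ∪ Vars g) (Vars h) →
      motive (mk f) (mk g) (mk h)) (a b c : IsoClass) : motive a b c := by
  obtain ⟨f, g, rfl, rfl, hd⟩ := exists_disjoint a b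
  obtain ⟨h, rfl⟩ := c.exists_mk_eq
  obtain ⟨σ, hσ⟩ := exists_disjoint_Vars_permAct (f + g) h
  rw [Vars_add hd] at hσ
  exact mk_permAct σ h ▸ mk f g _ hd hσ

theorem mk_op_eq_mk_op {op : K → K → K} (hop : IsEquivariant op) {f f' g g' : K}
    (hf : mk f = mk f') (hg : mk g = mk g') (hd : Disjoint (Vars f) (Vars g))
    (hd' : Disjoint (Vars f') (Vars g')) : mk (op f g) = mk (op f' g') := by
  obtain ⟨σ, rfl⟩ := mk_eq_mk.1 hf
  obtain ⟨τ, rfl⟩ := mk_eq_mk.1 hg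
  obtain ⟨ρ, hρf, hρg⟩ := exists_permAct_eq_and_permAct_eq hd hd'
  rw [← hρf, ← hρg, ← hop, mk_permAct]

/-- The operation on isomorphism classes induced by an operation on `K`, applied to
representatives with disjoint sets of variables. -/
def map₂ (op : K → K → K) (a b : IsoClass) : IsoClass :=
  mk (op (exists_disjoint a b).choose (exists_disjoint a b).choose_spec.choose)

theorem map₂_mk {op : K → K → K} (hop : IsEquivariant op) {f g : K}
    (hd : Disjoint (Vars f) (Vars g)) : map₂ op (mk f) (mk g) = mk (op f g) := by
  obtain ⟨hf, hg, hd'⟩ := (exists_disjoint (mk f) (mk g)).choose_spec.choose_spec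
  exact mk_op_eq_mk_op hop hf hg hd' hd

theorem map₂_comm {op : K → K → K} (hop : IsEquivariant op) (h : ∀ f g, op f g = op g f)
    (a b : IsoClass) : map₂ op a b = map₂ op b a := by
  induction a, b using ind₂ with
  | mk f g hd => rw [map₂_mk hop hd, map₂_mk hop hd.symm, h]

theorem map₂_assoc {op : K → K → K} (hop : IsEquivariant op)
    (h : ∀ f g h, op (op f g) h = op f (op g h)) (a b c : IsoClass) :
    map₂ op (map₂ op a b) c = map₂ op a (map₂ op b c) := by
  induction a, b, c using ind₃ with
  | mk f₁ f₂ f₃ hd hd' =>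
    obtain ⟨h₁₃, h₂₃⟩ := Set.disjoint_union_left.1 hd'
    rw [map₂_mk hop hd, map₂_mk hop (hd'.mono_left (Vars_op_subset hop _ _)), map₂_mk hop h₂₃,
      map₂_mk hop ((Set.disjoint_union_right.2 ⟨hd, h₁₃⟩).mono_right (Vars_op_subset hop _ _)), h]

instance : Neg IsoClass where
  neg := Quotient.map (- ·) fun f _ ⟨σ, hσ⟩ => ⟨σ, hσ ▸ map_neg (permAct σ) f⟩

instance : Inv IsoClass where
  inv := Quotient.map (·⁻¹) fun f _ ⟨σ, hσ⟩ => ⟨σ, hσ ▸ map_inv₀ (permAct σ) f⟩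

instance : Zero IsoClass := ⟨mk 0⟩

instance : One IsoClass := ⟨mk 1⟩

instance : Add IsoClass := ⟨map₂ (· + ·)⟩

instance : Mul IsoClass := ⟨map₂ (· * ·)⟩

theorem mk_neg (f : K) : mk (-f) = -mk f := rfl

theorem mk_inv (f : K) : mk f⁻¹ = (mk f)⁻¹ := rfl

theorem mk_add {f g : K} (hd : Disjoint (Vars f) (Vars g)) : mk (f + g) = mk f + mk g :=
  (map₂_mk isEquivariant_add hd).symm

theorem mk_mul {f g : K} (hd : Disjoint (Vars f) (Vars g)) : mk (f * g) = mk f * mk g :=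
  (map₂_mk isEquivariant_mul hd).symm

instance : SubtractionCommMonoid IsoClass where
  add_assoc := map₂_assoc isEquivariant_add add_assoc
  add_comm := map₂_comm isEquivariant_add add_comm
  zero_add a := by
    obtain ⟨f, rfl⟩ := a.exists_mk_eq
    exact (mk_add (by simp [Vars_zero])).symm.trans (congrArg mk (zero_add f))
  add_zero a := by
    obtain ⟨f, rfl⟩ := a.exists_mk_eq
    exact (mk_add (by simp [Vars_zero])).symm.trans (congrArg mk (add_zero f))
  nsmul := nsmulRec
  zsmul := zsmulRec
  neg_neg a := by
    obtain ⟨f, rfl⟩ := a.exists_mk_eq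
    exact congrArg mk (neg_neg f)
  neg_add_rev a b := by
    induction a, b using ind₂ with
    | mk f g hd =>
      rw [← mk_add hd, ← mk_neg, ← mk_neg, ← mk_neg, neg_add_rev, mk_add]
      rw [Vars_neg, Vars_neg]
      exact hd.symm
  neg_eq_of_add a b h := by
    induction a, b using ind₂ with
    | mk f g hd =>
      rw [← mk_add hd] at h
      rw [← mk_neg, neg_eq_of_add_eq_zero_right (mk_eq_mk_zero.1 h)]

instance : DivisionCommMonoid IsoClass where
  mul_assoc := map₂_assoc isEquivariant_mul mul_assoc
  mul_comm := map₂_comm isEquivariant_mul mul_comm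
  one_mul a := by
    obtain ⟨f, rfl⟩ := a.exists_mk_eq
    exact (mk_mul (by simp [Vars_one])).symm.trans (congrArg mk (one_mul f))
  mul_one a := by
    obtain ⟨f, rfl⟩ := a.exists_mk_eq
    exact (mk_mul (by simp [Vars_one])).symm.trans (congrArg mk (mul_one f))
  inv_inv a := by
    obtain ⟨f, rfl⟩ := a.exists_mk_eq
    exact congrArg mk (inv_inv f)
  mul_inv_rev a b := by
    induction a, b using ind₂ with
    | mk f g hd =>
      rw [← mk_mul hd, ← mk_inv, ← mk_inv, ← mk_inv, mul_inv_rev, mk_mul]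
      rw [Vars_inv, Vars_inv]
      exact hd.symm
  inv_eq_of_mul a b h := by
    induction a, b using ind₂ with
    | mk f g hd =>
      rw [← mk_mul hd] at h
      rw [← mk_inv, inv_eq_of_mul_eq_one_right (mk_eq_mk_one.1 h)]

instance : HasDistribNeg IsoClass where
  neg_neg := neg_neg
  neg_mul a b := by
    induction a, b using ind₂ with
    | mk f g hd => rw [← mk_neg, ← mk_mul (by rwa [Vars_neg]), neg_mul, mk_neg, mk_mul hd]
  mul_neg a b := by
    induction a, b using ind₂ with
    | mk f g hd => rw [← mk_neg, ← mk_mul (by rwa [Vars_neg]), mul_neg, mk_neg, mk_mul hd]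

theorem mk_sub {f g : K} (hd : Disjoint (Vars f) (Vars g)) : mk (f - g) = mk f - mk g := by
  rw [sub_eq_add_neg, mk_add (by rwa [Vars_neg]), mk_neg, sub_eq_add_neg]

theorem mk_div {f g : K} (hd : Disjoint (Vars f) (Vars g)) : mk (f / g) = mk f / mk g := by
  rw [div_eq_mul_inv, mk_mul (by rwa [Vars_inv]), mk_inv, div_eq_mul_inv]

/-- The isomorphism class of the variables. -/
def var : IsoClass := mk (Xv 0)

theorem mk_Xv (i : ℕ) : mk (Xv i) = var :=
  mk_eq_mk.2 ⟨Equiv.swap i 0, by rw [permAct_Xv, Equiv.swap_apply_left]⟩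

/-- The classes obtained from `a` and `b` by one arithmetic operation, in this order. -/
def operations (a b : IsoClass) : List IsoClass := [a + b, a - b, a * b, a / b]

theorem mem_operations {a b c : IsoClass} :
    c ∈ operations a b ↔ c = a + b ∨ c = a - b ∨ c = a * b ∨ c = a / b := by
  simp only [operations, List.mem_cons, List.not_mem_nil, or_false]

end IsoClass

theorem countClasses_eq_ncard_image_mk (S : Set K) :
    countClasses S = (IsoClass.mk '' S).ncard := by
  have hmk (f : K) : classOf f = {g | IsoClass.mk f = IsoClass.mk g} := by
    simp only [classOf, IsoClass.mk_eq_mk]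
  have hinj : Function.Injective fun a : IsoClass => {g | a = IsoClass.mk g} := by
    intro a b h
    obtain ⟨f, rfl⟩ := a.exists_mk_eq
    exact ((Set.ext_iff.1 h f).1 rfl).symm
  rw [countClasses, classes, funext hmk, ← Set.ncard_image_of_injective _ hinj, Set.image_image]

/-- `a` is the isomorphism class of an arithmetic expression with `n` operations, that is, with
`n + 1` variables. -/
def IsAEClass (n : ℕ) (a : IsoClass) : Prop :=
  ∃ f, IsAE f ∧ (Vars f).ncard = n + 1 ∧ IsoClass.mk f = a

theorem image_mk_AEn (n : ℕ) : IsoClass.mk '' AEn (n + 1) = {a | IsAEClass n a} := by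
  have hcard : (varsUpTo (n + 1)).ncard = n + 1 := by
    rw [show varsUpTo (n + 1) = Set.Icc 1 (n + 1) from rfl, ← Finset.coe_Icc,
      Set.ncard_coe_finset, Nat.card_Icc, Nat.add_sub_cancel]
  ext a
  constructor
  · rintro ⟨f, ⟨hf, hv⟩, rfl⟩
    exact ⟨f, hf, hv ▸ hcard, rfl⟩
  · rintro ⟨f, hf, hv, rfl⟩
    obtain ⟨σ, hσ⟩ := exists_perm_image_eq (Vars_finite f) (Set.finite_Icc 1 (n + 1))
      (hv.trans hcard.symm)
    exact ⟨permAct σ f, ⟨hf.permAct σ, (Vars_permAct σ f).trans hσ⟩, IsoClass.mk_permAct σ f⟩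

theorem ncard_Vars_union {f g : K} {m n : ℕ} (hf : (Vars f).ncard = m + 1)
    (hg : (Vars g).ncard = n + 1) (hd : Disjoint (Vars f) (Vars g)) :
    (Vars f ∪ Vars g).ncard = m + n + 1 + 1 := by
  rw [Set.ncard_union_eq hd (Vars_finite f) (Vars_finite g), hf, hg]
  omega

theorem IsAE.nonempty_Vars {f : K} (hf : IsAE f) : (Vars f).Nonempty := by
  induction hf with
  | var i => exact Vars_Xv i ▸ Set.singleton_nonempty i
  | add _ _ hd hg _ => exact Vars_add hd ▸ hg.inl
  | sub _ _ hd hg _ => exact Vars_sub hd ▸ hg.inl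
  | mul _ _ hd hg hh =>
    exact Vars_mul (ne_zero_of_Vars_nonempty hg) (ne_zero_of_Vars_nonempty hh) hd ▸ hg.inl
  | div _ _ hd hg hh =>
    exact Vars_div (ne_zero_of_Vars_nonempty hg) (ne_zero_of_Vars_nonempty hh) hd ▸ hg.inl

theorem IsAE.ne_zero {f : K} (hf : IsAE f) : f ≠ 0 := ne_zero_of_Vars_nonempty hf.nonempty_Vars

theorem IsAE.exists_ncard_Vars_eq {f : K} (hf : IsAE f) : ∃ n, (Vars f).ncard = n + 1 :=
  Nat.exists_eq_succ_of_ne_zero ((Set.ncard_pos (Vars_finite f)).2 hf.nonempty_Vars).ne'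

namespace IsAEClass

variable {m n : ℕ} {a b c : IsoClass}

protected theorem var : IsAEClass 0 .var :=
  ⟨Xv 0, .var 0, by rw [Vars_Xv, Set.ncard_singleton], rfl⟩

theorem exists_disjoint (ha : IsAEClass m a) (hb : IsAEClass n b) :
    ∃ f g, IsAE f ∧ IsAE g ∧ Disjoint (Vars f) (Vars g) ∧
      (Vars f ∪ Vars g).ncard = m + n + 1 + 1 ∧ IsoClass.mk f = a ∧ IsoClass.mk g = b := by
  obtain ⟨f, hf, hfm, rfl⟩ := ha
  obtain ⟨g, hg, hgn, rfl⟩ := hb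
  obtain ⟨σ, hd⟩ := exists_disjoint_Vars_permAct f g
  rw [← Set.ncard_image_of_injective _ σ.injective, ← Vars_permAct] at hgn
  exact ⟨f, permAct σ g, hf, hg.permAct σ, hd, ncard_Vars_union hfm hgn hd, rfl,
    IsoClass.mk_permAct σ g⟩

theorem of_mem_operations (ha : IsAEClass m a) (hb : IsAEClass n b) (hc : c ∈ a.operations b) :
    IsAEClass (m + n + 1) c := by
  obtain ⟨f, g, hf, hg, hd, hcard, rfl, rfl⟩ := ha.exists_disjoint hb
  obtain rfl | rfl | rfl | rfl := IsoClass.mem_operations.1 hc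
  · exact ⟨f + g, hf.add hg hd, Vars_add hd ▸ hcard, IsoClass.mk_add hd⟩
  · exact ⟨f - g, hf.sub hg hd, Vars_sub hd ▸ hcard, IsoClass.mk_sub hd⟩
  · exact ⟨f * g, hf.mul hg hd, Vars_mul hf.ne_zero hg.ne_zero hd ▸ hcard, IsoClass.mk_mul hd⟩
  · exact ⟨f / g, hf.div hg hd, Vars_div hf.ne_zero hg.ne_zero hd ▸ hcard, IsoClass.mk_div hd⟩

theorem eq_var_or_mem_operations (hc : IsAEClass n c) : (n = 0 ∧ c = .var) ∨
    ∃ i j, i + j + 1 = n ∧ ∃ a b, IsAEClass i a ∧ IsAEClass j b ∧ c ∈ a.operations b := by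
  obtain ⟨f, hf, hn, rfl⟩ := hc
  have compound {op : K → K → K} {g h : K} (hg : IsAE g) (hh : IsAE h)
      (hd : Disjoint (Vars g) (Vars h))
      (hop : Vars (op g h) = Vars g ∪ Vars h)
      (hn : (Vars (op g h)).ncard = n + 1)
      (hmk : IsoClass.mk (op g h) ∈ (IsoClass.mk g).operations (IsoClass.mk h)) :
      ∃ i j, i + j + 1 = n ∧ ∃ a b, IsAEClass i a ∧ IsAEClass j b ∧
        IsoClass.mk (op g h) ∈ a.operations b := by
    obtain ⟨i, hi⟩ := hg.exists_ncard_Vars_eq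
    obtain ⟨j, hj⟩ := hh.exists_ncard_Vars_eq
    rw [hop, ncard_Vars_union hi hj hd] at hn
    exact ⟨i, j, by omega, _, _, ⟨g, hg, hi, rfl⟩, ⟨h, hh, hj, rfl⟩, hmk⟩
  cases hf with
  | var i =>
    rw [Vars_Xv, Set.ncard_singleton] at hn
    exact .inl ⟨by omega, IsoClass.mk_Xv i⟩
  | add hg hh hd =>
    exact .inr <| compound hg hh hd (Vars_add hd) hn <|
      IsoClass.mem_operations.2 <| .inl <| IsoClass.mk_add hd
  | sub hg hh hd =>
    exact .inr <| compound hg hh hd (Vars_sub hd) hn <|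
      IsoClass.mem_operations.2 <| .inr <| .inl <| IsoClass.mk_sub hd
  | mul hg hh hd =>
    exact .inr <| compound hg hh hd (Vars_mul hg.ne_zero hh.ne_zero hd) hn <|
      IsoClass.mem_operations.2 <| .inr <| .inr <| .inl <| IsoClass.mk_mul hd
  | div hg hh hd =>
    exact .inr <| compound hg hh hd (Vars_div hg.ne_zero hh.ne_zero hd) hn <|
      IsoClass.mem_operations.2 <| .inr <| .inr <| .inr <| IsoClass.mk_div hd

end IsAEClass

theorem isAEClass_iff {n : ℕ} {c : IsoClass} : IsAEClass n c ↔ (n = 0 ∧ c = .var) ∨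
    ∃ i j, i + j + 1 = n ∧ ∃ a b, IsAEClass i a ∧ IsAEClass j b ∧ c ∈ a.operations b := by
  refine ⟨IsAEClass.eq_var_or_mem_operations, ?_⟩
  rintro (⟨rfl, rfl⟩ | ⟨i, j, rfl, a, b, ha, hb, hc⟩)
  exacts [.var, ha.of_mem_operations hb hc]

/-! ### The moment functional -/

section MomentFunctional

variable {σ τ R : Type*} [CommSemiring R] (μ : ℕ → R)

/-- The linear functional sending each monomial `∏ xᵢ ^ kᵢ` to `∏ μ kᵢ`: the expectation of a
polynomial in independent variables that all have the moments `μ`. -/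
def momentFunctional : MvPolynomial σ R →ₗ[R] R :=
  (basisMonomials σ R).constr R fun s => s.prod fun _ k => μ k

theorem momentFunctional_monomial (s : σ →₀ ℕ) (c : R) :
    momentFunctional μ (monomial s c) = c * s.prod fun _ k => μ k := by
  have h : monomial s c = c • basisMonomials σ R s := by
    rw [coe_basisMonomials, smul_monomial, smul_eq_mul, mul_one]
  rw [h, map_smul, momentFunctional, Module.Basis.constr_basis, smul_eq_mul]

theorem momentFunctional_C_mul (c : R) (p : MvPolynomial σ R) :
    momentFunctional μ (C c * p) = c * momentFunctional μ p := by
  rw [← smul_eq_C_mul, map_smul, smul_eq_mul]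

theorem momentFunctional_X_pow (hμ : μ 0 = 1) (i : σ) (k : ℕ) :
    momentFunctional μ (X i ^ k : MvPolynomial σ R) = μ k := by
  rw [X_pow_eq_monomial, momentFunctional_monomial, one_mul, Finsupp.prod_single_index hμ]

theorem momentFunctional_eq_sum (p : MvPolynomial σ R) :
    momentFunctional μ p = ∑ s ∈ p.support, coeff s p * s.prod fun _ k => μ k := by
  conv_lhs => rw [p.as_sum, map_sum]
  exact Finset.sum_congr rfl fun s _ => momentFunctional_monomial μ s _

theorem momentFunctional_rename {e : σ → τ} (he : Function.Injective e) (p : MvPolynomial σ R) :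
    momentFunctional μ (rename e p) = momentFunctional μ p := by
  induction p using induction_on' with
  | monomial s c =>
    rw [rename_monomial, momentFunctional_monomial, momentFunctional_monomial,
      Finsupp.prod_mapDomain_index_inj he]
  | add p q hp hq => rw [map_add, map_add, map_add, hp, hq]

theorem momentFunctional_mul {p q : MvPolynomial σ R} (h : Disjoint p.vars q.vars) :
    momentFunctional μ (p * q) = momentFunctional μ p * momentFunctional μ q := by
  rw [momentFunctional_eq_sum μ p, momentFunctional_eq_sum μ q, Finset.sum_mul_sum]
  conv_lhs => rw [p.as_sum, q.as_sum, Finset.sum_mul_sum, map_sum]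
  refine Finset.sum_congr rfl fun s hs => ?_
  rw [map_sum]
  refine Finset.sum_congr rfl fun t ht => ?_
  have hst : Disjoint s.support t.support :=
    h.mono (support_subset_vars_of_mem_support hs) (support_subset_vars_of_mem_support ht)
  rw [monomial_mul, momentFunctional_monomial, Finsupp.prod_add_index_of_disjoint hst]
  exact mul_mul_mul_comm _ _ _ _

end MomentFunctional

/-- A moment sequence for the variables; only its first five terms are used. Their values are
arbitrary, subject to separating the classes that have to be counted. -/
def varMoment : ℕ → ℝ
  | 1 => 2
  | 2 => 7
  | 3 => 30
  | 4 => 200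
  | _ => 1

/-- The `j`-th moment of the fraction `p / q`. Using forms of the fixed degree `4` in `p` and `q`
makes the moments of an expression well defined up to a common positive factor. -/
def moment (p q : P) (j : ℕ) : ℝ := momentFunctional varMoment (p ^ j * q ^ (4 - j))

section Moment

variable {p q r s : P} {j : ℕ}

theorem momentFunctional_mul_pow {μ : ℕ → ℝ}
    (hd : Disjoint (p.vars ∪ q.vars) (r.vars ∪ s.vars)) (i j k l : ℕ) :
    momentFunctional μ (p ^ i * q ^ j * (r ^ k * s ^ l)) =
      momentFunctional μ (p ^ i * q ^ j) * momentFunctional μ (r ^ k * s ^ l) := by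
  have hvars (p q : P) (i j : ℕ) : (p ^ i * q ^ j).vars ⊆ p.vars ∪ q.vars :=
    (vars_mul _ _).trans (Finset.union_subset_union (vars_pow _ _) (vars_pow _ _))
  exact momentFunctional_mul μ (hd.mono (hvars p q i j) (hvars r s k l))

theorem moment_X_one (i : ℕ) : moment (X i) 1 j = varMoment j := by
  rw [moment, one_pow, mul_one, momentFunctional_X_pow _ rfl]

theorem moment_neg : moment (-p) q j = (-1) ^ j * moment p q j := by
  rw [moment, moment, ← momentFunctional_C_mul, neg_pow, C_pow, C_neg, C_1, mul_assoc]

theorem moment_swap (hj : j ≤ 4) : moment q p j = moment p q (4 - j) := by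
  rw [moment, moment, Nat.sub_sub_self hj, mul_comm]

theorem moment_mul (hd : Disjoint (p.vars ∪ q.vars) (r.vars ∪ s.vars)) :
    moment (p * r) (q * s) j = moment p q j * moment r s j := by
  rw [moment, moment, moment, ← momentFunctional_mul_pow hd, mul_pow, mul_pow, mul_mul_mul_comm]

theorem moment_add (hj : j ≤ 4) (hd : Disjoint (p.vars ∪ q.vars) (r.vars ∪ s.vars)) :
    moment (p * s + q * r) (q * s) j =
      ∑ i ∈ Finset.range (j + 1), j.choose i * (moment p q i * moment r s (j - i)) := by
  rw [moment, add_pow, Finset.sum_mul, map_sum]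
  refine Finset.sum_congr rfl fun i hi => ?_
  have hij : i ≤ j := Finset.mem_range_succ_iff.1 hi
  obtain ⟨k, rfl⟩ := Nat.exists_eq_add_of_le hij
  obtain ⟨l, hl⟩ := Nat.exists_eq_add_of_le hj
  rw [moment, moment, ← momentFunctional_mul_pow hd, ← momentFunctional_C_mul]
  congr 1
  rw [map_natCast, Nat.add_sub_cancel_left, show 4 - (i + k) = l by omega,
    show 4 - i = k + l by omega, show 4 - k = i + l by omega]
  ring

theorem moment_C_mul (c : ℝ) (hj : j ≤ 4) :
    moment (C c * p) (C c * q) j = c ^ 4 * moment p q j := by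
  rw [moment, moment, ← momentFunctional_C_mul, mul_pow, mul_pow, mul_mul_mul_comm, ← C_pow,
    ← C_pow, ← C_mul, ← pow_add, Nat.add_sub_cancel' hj]

theorem moment_rename (σ : Equiv.Perm ℕ) : moment (rename σ p) (rename σ q) j = moment p q j := by
  rw [moment, moment, ← map_pow, ← map_pow, ← map_mul, momentFunctional_rename _ σ.injective]

end Moment

/-- Five integers, standing for the moments of order `0, …, 4` of an expression. -/
structure Moments : Type where
  (m₀ m₁ m₂ m₃ m₄ : ℤ)

theorem ediv_eq_ediv_of_eq_mul {a b a' b' : ℤ} {c : ℝ} (hc : 0 < c) (ha : (a' : ℝ) = c * a)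
    (hb : (b' : ℝ) = c * b) : a' / b' = a / b := by
  obtain rfl | hb0 := eq_or_ne b 0
  · obtain rfl : b' = 0 := by simpa using hb
    simp
  have hb0' : b' ≠ 0 := by
    rw [← Int.cast_ne_zero (α := ℝ), hb]
    exact mul_ne_zero hc.ne' (Int.cast_ne_zero.2 hb0)
  have habs : ((|b'| : ℤ) : ℝ) = c * (|b| : ℤ) := by
    rw [Int.cast_abs, Int.cast_abs, hb, abs_mul, abs_of_pos hc]
  have hnum : |b| * a' = |b'| * a := by
    rw [← Int.cast_inj (α := ℝ), Int.cast_mul, Int.cast_mul, ha, habs]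
    ring
  have hden : |b| * b' = |b'| * b := by
    rw [← Int.cast_inj (α := ℝ), Int.cast_mul, Int.cast_mul, hb, habs]
    ring
  rw [← Int.mul_ediv_mul_of_pos a' b' (abs_pos.2 hb0), hnum, hden,
    Int.mul_ediv_mul_of_pos a b (abs_pos.2 hb0')]

namespace Moments

/-- The moment of order `j`. -/
def get : Moments → ℕ → ℤ
  | ⟨a, _, _, _, _⟩, 0 => a
  | ⟨_, a, _, _, _⟩, 1 => a
  | ⟨_, _, a, _, _⟩, 2 => a
  | ⟨_, _, _, a, _⟩, 3 => a
  | ⟨_, _, _, _, a⟩, _ => a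

/-- The moments of `-f`. -/
def neg : Moments → Moments
  | ⟨a₀, a₁, a₂, a₃, a₄⟩ => ⟨a₀, -a₁, a₂, -a₃, a₄⟩

/-- The moments of `f⁻¹`. -/
def inv : Moments → Moments
  | ⟨a₀, a₁, a₂, a₃, a₄⟩ => ⟨a₄, a₃, a₂, a₁, a₀⟩

/-- The moments of `f * g`, for `f` and `g` in disjoint variables. -/
def mul : Moments → Moments → Moments
  | ⟨a₀, a₁, a₂, a₃, a₄⟩, ⟨b₀, b₁, b₂, b₃, b₄⟩ => ⟨a₀ * b₀, a₁ * b₁, a₂ * b₂, a₃ * b₃, a₄ * b₄⟩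

/-- The moments of `f + g`, for `f` and `g` in disjoint variables. -/
def add : Moments → Moments → Moments
  | ⟨a₀, a₁, a₂, a₃, a₄⟩, ⟨b₀, b₁, b₂, b₃, b₄⟩ =>
    ⟨a₀ * b₀,
      a₁ * b₀ + a₀ * b₁,
      a₂ * b₀ + 2 * a₁ * b₁ + a₀ * b₂,
      a₃ * b₀ + 3 * a₂ * b₁ + 3 * a₁ * b₂ + a₀ * b₃,
      a₄ * b₀ + 4 * a₃ * b₁ + 6 * a₂ * b₂ + 4 * a₁ * b₃ + a₀ * b₄⟩

variable (v w : Moments) {j : ℕ}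

theorem get_neg (hj : j ≤ 4) : v.neg.get j = (-1) ^ j * v.get j := by
  interval_cases j <;> simp [get, neg]

theorem get_inv (hj : j ≤ 4) : v.inv.get j = v.get (4 - j) := by
  interval_cases j <;> rfl

theorem get_mul (hj : j ≤ 4) : (v.mul w).get j = v.get j * w.get j := by
  interval_cases j <;> rfl

theorem get_add (hj : j ≤ 4) :
    (v.add w).get j = ∑ i ∈ Finset.range (j + 1), j.choose i * (v.get i * w.get (j - i)) := by
  interval_cases j <;> simp [Finset.sum_range_succ, get, add, Nat.choose] <;> ring

/-- A natural number depending only on the ratios between the moments, used to order the classes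
of expressions. The factor `10 ^ 12` keeps enough digits of the ratio to separate the classes, and
the reduction modulo a prime only shuffles them, so that search trees ordered by the key stay
balanced. -/
def key : Moments → ℕ
  | ⟨a₀, a₁, a₂, a₃, a₄⟩ =>
    (1000000000000 * (a₁ + a₂ + a₃ + a₄) / a₀ % 1000000007).toNat

theorem key_eq_of_get_eq_mul {v w : Moments} {c : ℝ} (hc : 0 < c)
    (h : ∀ j ≤ 4, (w.get j : ℝ) = c * v.get j) : w.key = v.key := by
  obtain ⟨a₀, a₁, a₂, a₃, a₄⟩ := v
  obtain ⟨b₀, b₁, b₂, b₃, b₄⟩ := w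
  have h₀ : (b₀ : ℝ) = c * a₀ := h 0 (by decide)
  have h₁ : (b₁ : ℝ) = c * a₁ := h 1 (by decide)
  have h₂ : (b₂ : ℝ) = c * a₂ := h 2 (by decide)
  have h₃ : (b₃ : ℝ) = c * a₃ := h 3 (by decide)
  have h₄ : (b₄ : ℝ) = c * a₄ := h 4 (by decide)
  have hdiv : 1000000000000 * (b₁ + b₂ + b₃ + b₄) / b₀ =
      1000000000000 * (a₁ + a₂ + a₃ + a₄) / a₀ :=
    ediv_eq_ediv_of_eq_mul hc (by push_cast; rw [h₁, h₂, h₃, h₄]; ring) h₀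
  rw [key, key, hdiv]

end Moments

/-- The class `a` contains an expression whose moments are those listed in `v`. -/
def HasMoments (a : IsoClass) (v : Moments) : Prop :=
  ∃ f p q, IsoClass.mk f = a ∧ (Vars f).Nonempty ∧ IsReducedRep f p q ∧
    ∀ j ≤ 4, moment p q j = v.get j

namespace HasMoments

variable {a b : IsoClass} {v w : Moments}

protected theorem var : HasMoments .var ⟨1, 2, 7, 30, 200⟩ := by
  refine ⟨Xv 0, X 0, 1, rfl, by simp [Vars_Xv], .var 0, fun j hj => ?_⟩
  rw [moment_X_one]
  interval_cases j <;> simp [varMoment, Moments.get]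

protected theorem neg (ha : HasMoments a v) : HasMoments (-a) v.neg := by
  obtain ⟨f, p, q, rfl, hf, hr, hv⟩ := ha
  refine ⟨-f, -p, q, IsoClass.mk_neg f, by rwa [Vars_neg], hr.neg, fun j hj => ?_⟩
  rw [moment_neg, hv j hj, Moments.get_neg v hj]
  push_cast
  rfl

protected theorem inv (ha : HasMoments a v) : HasMoments a⁻¹ v.inv := by
  obtain ⟨f, p, q, rfl, hf, hr, hv⟩ := ha
  refine ⟨f⁻¹, q, p, IsoClass.mk_inv f, by rwa [Vars_inv],
    hr.inv (ne_zero_of_Vars_nonempty hf), fun j hj => ?_⟩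
  rw [moment_swap hj, hv _ (Nat.sub_le 4 j), Moments.get_inv v hj]

theorem exists_disjoint (ha : HasMoments a v) (hb : HasMoments b w) :
    ∃ f p q g r s, IsoClass.mk f = a ∧ IsoClass.mk g = b ∧ Disjoint (Vars f) (Vars g) ∧
      (Vars f ∪ Vars g).Nonempty ∧ f ≠ 0 ∧ g ≠ 0 ∧ IsReducedRep f p q ∧ IsReducedRep g r s ∧
      (∀ j ≤ 4, moment p q j = v.get j) ∧ ∀ j ≤ 4, moment r s j = w.get j := by
  obtain ⟨f, p, q, rfl, hf, hr, hv⟩ := ha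
  obtain ⟨g, r, s, rfl, hg, hr', hw⟩ := hb
  obtain ⟨σ, hd⟩ := exists_disjoint_Vars_permAct f g
  have hg0 : permAct σ g ≠ 0 :=
    ne_zero_of_Vars_nonempty (by rw [Vars_permAct]; exact hg.image σ)
  exact ⟨f, p, q, permAct σ g, rename σ r, rename σ s, rfl, IsoClass.mk_permAct σ g, hd, hf.inl,
    ne_zero_of_Vars_nonempty hf, hg0, hr, hr'.permAct σ, hv,
    fun j hj => (moment_rename σ).trans (hw j hj)⟩

protected theorem mul (ha : HasMoments a v) (hb : HasMoments b w) :
    HasMoments (a * b) (v.mul w) := by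
  obtain ⟨f, p, q, g, r, s, rfl, rfl, hd, hne, hf, hg, hr, hr', hv, hw⟩ := ha.exists_disjoint hb
  refine ⟨f * g, p * r, q * s, IsoClass.mk_mul hd, by rwa [Vars_mul hf hg hd],
    hr.mul hr' hf hg hd, fun j hj => ?_⟩
  rw [moment_mul (hr.disjoint hr' hd), hv j hj, hw j hj, Moments.get_mul v w hj, Int.cast_mul]

protected theorem add (ha : HasMoments a v) (hb : HasMoments b w) :
    HasMoments (a + b) (v.add w) := by
  obtain ⟨f, p, q, g, r, s, rfl, rfl, hd, hne, -, -, hr, hr', hv, hw⟩ := ha.exists_disjoint hb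
  refine ⟨f + g, p * s + q * r, q * s, IsoClass.mk_add hd, by rwa [Vars_add hd],
    hr.add hr' hd, fun j hj => ?_⟩
  rw [moment_add hj (hr.disjoint hr' hd), Moments.get_add v w hj, Int.cast_sum]
  refine Finset.sum_congr rfl fun i hi => ?_
  have hij : i ≤ j := Finset.mem_range_succ_iff.1 hi
  rw [hv i (hij.trans hj), hw (j - i) ((Nat.sub_le j i).trans hj)]
  push_cast
  rfl

theorem key_eq (hv : HasMoments a v) (hw : HasMoments a w) : v.key = w.key := by
  obtain ⟨f, p, q, rfl, -, hr, hv⟩ := hv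
  obtain ⟨g, r, s, hg, -, hr', hw⟩ := hw
  obtain ⟨σ, rfl⟩ := IsoClass.mk_eq_mk.1 hg
  obtain ⟨c, hc, hp, hq⟩ := (hr'.permAct σ).unique hr
  refine Moments.key_eq_of_get_eq_mul (c := c ^ 4) (by positivity) fun j hj => ?_
  rw [← hv j hj, ← hw j hj, hp, hq, moment_C_mul c hj, moment_rename]

end HasMoments

/-! ### Shapes of expressions -/

/-- Expressions without variable names: `x` stands for a new variable at each occurrence, so that
a shape describes a single isomorphism class. -/
inductive Shape : Type
  | x
  | neg (a : Shape)
  | add (a b : Shape)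
  | mul (a b : Shape)
  | div (a b : Shape)
deriving DecidableEq

namespace Shape

/-- The isomorphism class described by a shape. -/
def eval : Shape → IsoClass
  | x => .var
  | neg a => -a.eval
  | add a b => a.eval + b.eval
  | mul a b => a.eval * b.eval
  | div a b => a.eval / b.eval

/-- The number whose base `5` digits are those of `k` followed by the constructors of the shape, in
postfix order. -/
def encode : Shape → ℕ → ℕ
  | x, k => 5 * k
  | neg a, k => a.encode (5 * k + 1)
  | add a b, k => b.encode (a.encode (5 * k + 2))
  | mul a b, k => b.encode (a.encode (5 * k + 3))
  | div a b, k => b.encode (a.encode (5 * k + 4))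

/-- A number by which the summands and the factors of a normal form are sorted. -/
def code (s : Shape) : ℕ := s.encode 0

/-- The sum of a shape with a sorted, right-nested sum. -/
def insertSummand (t : Shape) : Shape → Shape
  | add u v => if t.code ≤ u.code then add t (add u v) else add u (insertSummand t v)
  | s => if t.code ≤ s.code then add t s else add s t

/-- The sum of two sorted, right-nested sums. -/
def nfAdd : Shape → Shape → Shape
  | add u v, s => insertSummand u (nfAdd v s)
  | t, s => insertSummand t s

/-- The product of a shape with a sorted, right-nested product. -/
def insertFactor (t : Shape) : Shape → Shape
  | mul u v => if t.code ≤ u.code then mul t (mul u v) else mul u (insertFactor t v)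
  | s => if t.code ≤ s.code then mul t s else mul s t

/-- The product of two sorted, right-nested products. -/
def mergeFactors : Shape → Shape → Shape
  | mul u v, s => insertFactor u (mergeFactors v s)
  | t, s => insertFactor t s

/-- The normal form of the negative of a normal form. A product or quotient with a factor that is
isomorphic to its own negative absorbs the sign. -/
def nfNeg : Shape → Shape
  | x => neg x
  | neg a => a
  | add a b => nfAdd (nfNeg a) (nfNeg b)
  | mul a b => if nfNeg a = a ∨ nfNeg b = b then mul a b else neg (mul a b)
  | div a b => if nfNeg a = a ∨ nfNeg b = b then div a b else neg (div a b)

/-- Splits off the sign (`true` for `-`) of a factor; of a sum and its negative, the one with the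
smaller code counts as positive. -/
def splitSign : Shape → Bool × Shape
  | neg a => (true, a)
  | add a b =>
    if (nfNeg (add a b)).code < (add a b).code then (true, nfNeg (add a b))
    else (false, add a b)
  | s => (false, s)

/-- Reattaches a sign (`true` for `-`). -/
def withSign (e : Bool) (s : Shape) : Shape := if e then nfNeg s else s

/-- The product of two quotients of products, as such a quotient. -/
def mergeFractions : Shape → Shape → Shape
  | div a b, div c d => div (mergeFactors a c) (mergeFactors b d)
  | div a b, c => div (mergeFactors a c) b
  | a, div c d => div (mergeFactors a c) d
  | a, c => mergeFactors a c

/-- The quotient of two quotients of products, as such a quotient. -/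
def divFractions : Shape → Shape → Shape
  | div a b, div c d => div (mergeFactors a d) (mergeFactors b c)
  | div a b, c => div a (mergeFactors b c)
  | a, div c d => div (mergeFactors a d) c
  | a, c => div a c

/-- The normal form of a product of normal forms. -/
def nfMul (a b : Shape) : Shape :=
  withSign (xor a.splitSign.1 b.splitSign.1) (mergeFractions a.splitSign.2 b.splitSign.2)

/-- The normal form of a quotient of normal forms. -/
def nfDiv (a b : Shape) : Shape :=
  withSign (xor a.splitSign.1 b.splitSign.1) (divFractions a.splitSign.2 b.splitSign.2)

/-- The normal forms of the four combinations of two normal forms, in the order of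
`IsoClass.operations`. -/
def combine (a b : Shape) : List Shape := [nfAdd a b, nfAdd a (nfNeg b), nfMul a b, nfDiv a b]

theorem eval_insertSummand (t s : Shape) : (insertSummand t s).eval = t.eval + s.eval := by
  fun_induction insertSummand t s with
  | case1 => rfl
  | case2 u v _ ih => rw [eval, ih, eval, add_left_comm]
  | case3 => rfl
  | case4 s => exact add_comm _ _

theorem eval_nfAdd (a b : Shape) : (nfAdd a b).eval = a.eval + b.eval := by
  fun_induction nfAdd a b with
  | case1 u v s ih => rw [eval_insertSummand, ih, eval, add_assoc]
  | case2 => rw [eval_insertSummand]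

theorem eval_insertFactor (t s : Shape) : (insertFactor t s).eval = t.eval * s.eval := by
  fun_induction insertFactor t s with
  | case1 => rfl
  | case2 u v _ ih => rw [eval, ih, eval, mul_left_comm]
  | case3 => rfl
  | case4 s => exact mul_comm _ _

theorem eval_mergeFactors (a b : Shape) : (mergeFactors a b).eval = a.eval * b.eval := by
  fun_induction mergeFactors a b with
  | case1 u v s ih => rw [eval_insertFactor, ih, eval, mul_assoc]
  | case2 => rw [eval_insertFactor]

theorem eval_nfNeg (s : Shape) : (nfNeg s).eval = -s.eval := by
  fun_induction nfNeg s with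
  | case1 => rfl
  | case2 a => rw [eval, neg_neg]
  | case3 a b iha ihb => rw [eval_nfAdd, iha, ihb, eval, neg_add]
  | case4 a b h iha ihb =>
    obtain h | h := h
    · rw [h] at iha
      rw [eval, ← neg_mul, ← iha]
    · rw [h] at ihb
      rw [eval, ← mul_neg, ← ihb]
  | case5 => rfl
  | case6 a b h iha ihb =>
    obtain h | h := h
    · rw [h] at iha
      rw [eval, ← neg_div, ← iha]
    · rw [h] at ihb
      rw [eval, ← div_neg, ← ihb]
  | case7 => rfl

theorem eval_withSign (e : Bool) (s : Shape) :
    (withSign e s).eval = if e then -s.eval else s.eval := by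
  rw [withSign, apply_ite eval, eval_nfNeg]

theorem eval_eq_splitSign (s : Shape) :
    s.eval = if s.splitSign.1 then -s.splitSign.2.eval else s.splitSign.2.eval := by
  fun_cases splitSign s with
  | case1 => rfl
  | case2 => simp only [if_true, eval_nfNeg, neg_neg]
  | case3 => rfl
  | case4 => rfl

theorem eval_mergeFractions (a b : Shape) : (mergeFractions a b).eval = a.eval * b.eval := by
  fun_cases mergeFractions a b <;> simp only [eval, eval_mergeFactors]
  · rw [div_mul_div_comm]
  · rw [div_mul_eq_mul_div]
  · rw [mul_div_assoc]

theorem eval_divFractions (a b : Shape) : (divFractions a b).eval = a.eval / b.eval := by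
  fun_cases divFractions a b <;> simp only [eval, eval_mergeFactors]
  · rw [div_div_div_eq]
  · rw [div_div]
  · rw [div_div_eq_mul_div]

theorem eval_nfMul (a b : Shape) : (nfMul a b).eval = a.eval * b.eval := by
  rw [nfMul, eval_withSign, eval_mergeFractions, eval_eq_splitSign a, eval_eq_splitSign b]
  cases a.splitSign.1 <;> cases b.splitSign.1 <;> simp

theorem eval_nfDiv (a b : Shape) : (nfDiv a b).eval = a.eval / b.eval := by
  rw [nfDiv, eval_withSign, eval_divFractions, eval_eq_splitSign a, eval_eq_splitSign b]
  cases a.splitSign.1 <;> cases b.splitSign.1 <;> simp [neg_div, div_neg]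

theorem map_eval_combine (a b : Shape) : (combine a b).map eval = a.eval.operations b.eval := by
  simp only [combine, List.map_cons, List.map_nil, eval_nfAdd, eval_nfNeg, eval_nfMul,
    eval_nfDiv, IsoClass.operations, sub_eq_add_neg]

/-- The moments of the class described by a shape. -/
def moments : Shape → Moments
  | x => ⟨1, 2, 7, 30, 200⟩
  | neg a => a.moments.neg
  | add a b => a.moments.add b.moments
  | mul a b => a.moments.mul b.moments
  | div a b => a.moments.mul b.moments.inv

theorem hasMoments_eval : ∀ s : Shape, HasMoments s.eval s.moments
  | x => .var
  | neg a => a.hasMoments_eval.neg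
  | add a b => a.hasMoments_eval.add b.hasMoments_eval
  | mul a b => a.hasMoments_eval.mul b.hasMoments_eval
  | div a b => by
    rw [eval, div_eq_mul_inv]
    exact a.hasMoments_eval.mul b.hasMoments_eval.inv

/-- The key of the class described by a shape. -/
def key (s : Shape) : ℕ := s.moments.key

theorem key_eq_of_eval_eq {s t : Shape} (h : s.eval = t.eval) : s.key = t.key :=
  HasMoments.key_eq (h ▸ s.hasMoments_eval) t.hasMoments_eval

end Shape

/-! ### Enumeration of the classes -/

section SearchTree

/-- Binary search trees, used to remove duplicates from long lists. -/
inductive SearchTree (α : Type*)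
  | nil
  | node (l : SearchTree α) (a : α) (r : SearchTree α)

namespace SearchTree

variable {α : Type*}

/-- The elements of a tree from left to right. -/
def toList : SearchTree α → List α
  | nil => []
  | node t a u => t.toList ++ a :: u.toList

theorem mem_toList_node {t u : SearchTree α} {a b : α} :
    b ∈ (node t a u).toList ↔ b ∈ t.toList ∨ b = a ∨ b ∈ u.toList := by
  rw [toList, List.mem_append, List.mem_cons]

variable [DecidableEq α] (key : α → ℕ)

/-- Adds `a` to a tree ordered by `key`, unless it is there already. Elements with equal keys may
coexist. -/
def insert (a : α) : SearchTree α → SearchTree α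
  | nil => node nil a nil
  | node t b u =>
    if key a < key b then node (t.insert a) b u
    else if key b < key a then node t b (u.insert a)
    else if a = b then node t b u else node t b (u.insert a)

theorem mem_toList_insert {a b : α} {t : SearchTree α} :
    b ∈ (t.insert key a).toList ↔ b = a ∨ b ∈ t.toList := by
  fun_induction insert key a t with
  | case1 => exact List.mem_cons
  | case2 t c u _ ih => simp only [mem_toList_node, ih, or_assoc]
  | case3 t c u _ _ ih | case5 t c u _ _ _ ih =>
    simp only [mem_toList_node, ih, or_left_comm]
  | case4 t u => simp only [mem_toList_node]; tauto

end SearchTree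

/-- Sorts a list by `key` and removes duplicates. -/
def sortDedup {α : Type*} [DecidableEq α] (key : α → ℕ) (l : List α) : List α :=
  (l.foldr (SearchTree.insert key) .nil).toList

theorem mem_sortDedup {α : Type*} [DecidableEq α] {key : α → ℕ} {l : List α} {a : α} :
    a ∈ sortDedup key l ↔ a ∈ l := by
  rw [sortDedup]
  induction l with
  | nil => rfl
  | cons b l ih => rw [List.foldr_cons, SearchTree.mem_toList_insert, ih, List.mem_cons]

end SearchTree

/-- The lists of normal forms of expressions with `0, …, n` operations. -/
def levels : ℕ → List (List Shape)
  | 0 => [[.x]]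
  | n + 1 => levels n ++ [sortDedup Shape.key <| (List.Nat.antidiagonal n).flatMap fun ij =>
      ((levels n).getD ij.1 []).flatMap fun a =>
        ((levels n).getD ij.2 []).flatMap fun b => a.combine b]

/-- The normal forms of expressions with `n` operations. -/
def level (n : ℕ) : List Shape := (levels n).getD n []

theorem length_levels (n : ℕ) : (levels n).length = n + 1 := by
  induction n with
  | zero => rfl
  | succ n ih => rw [levels, List.length_append, ih, List.length_singleton]

theorem getD_levels {m n : ℕ} (h : m ≤ n) : (levels n).getD m [] = level m := by
  induction n, h using Nat.le_induction with
  | base => rfl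
  | succ n h ih =>
    rw [levels, List.getD_append _ _ _ _ (by rw [length_levels]; omega), ih]

theorem mem_level_succ {n : ℕ} {s : Shape} : s ∈ level (n + 1) ↔
    ∃ i j, i + j = n ∧ ∃ a ∈ level i, ∃ b ∈ level j, s ∈ a.combine b := by
  rw [level, levels, List.getD_append_right _ _ _ _ (length_levels n).le, length_levels,
    Nat.sub_self, List.getD_cons_zero, mem_sortDedup]
  simp only [List.mem_flatMap, Prod.exists, List.Nat.mem_antidiagonal]
  refine exists₂_congr fun i j => and_congr_right fun h => ?_
  rw [getD_levels (by omega : i ≤ n), getD_levels (by omega : j ≤ n)]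

theorem mem_map_eval_level_iff {n : ℕ} {c : IsoClass} :
    c ∈ (level n).map Shape.eval ↔ (n = 0 ∧ c = .var) ∨ ∃ i j, i + j + 1 = n ∧
      ∃ a b, a ∈ (level i).map Shape.eval ∧ b ∈ (level j).map Shape.eval ∧
        c ∈ a.operations b := by
  cases n with
  | zero => simp [level, levels, Shape.eval]
  | succ n =>
    simp only [List.mem_map, mem_level_succ, Nat.add_right_cancel_iff, Nat.add_one_ne_zero,
      false_and, false_or]
    constructor
    · rintro ⟨s, ⟨i, j, hij, a, ha, b, hb, hs⟩, rfl⟩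
      exact ⟨i, j, hij, _, _, ⟨a, ha, rfl⟩, ⟨b, hb, rfl⟩,
        Shape.map_eval_combine a b ▸ List.mem_map_of_mem hs⟩
    · rintro ⟨i, j, hij, _, _, ⟨a, ha, rfl⟩, ⟨b, hb, rfl⟩, hc⟩
      rw [← Shape.map_eval_combine, List.mem_map] at hc
      obtain ⟨s, hs, rfl⟩ := hc
      exact ⟨s, ⟨i, j, hij, a, ha, b, hb, hs⟩, rfl⟩

theorem isAEClass_iff_mem_map_eval_level {n : ℕ} {c : IsoClass} :
    IsAEClass n c ↔ c ∈ (level n).map Shape.eval := by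
  induction n using Nat.strong_induction_on generalizing c with
  | h n ih =>
    rw [isAEClass_iff, mem_map_eval_level_iff]
    refine or_congr_right <| exists₂_congr fun i j => and_congr_right fun hij => ?_
    simp only [ih i (by omega), ih j (by omega)]

theorem countClasses_AEn_eq_length_level {n : ℕ}
    (h : ((level n).map Shape.key).IsChain (· < ·)) :
    countClasses (AEn (n + 1)) = (level n).length := by
  classical
  have hkey : ((level n).map Shape.key).Nodup := h.pairwise.imp ne_of_lt
  have hnodup : ((level n).map Shape.eval).Nodup := hkey.of_map.map_on fun s hs t ht hst =>
    List.inj_on_of_nodup_map hkey hs ht (Shape.key_eq_of_eval_eq hst)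
  have hset : {c | IsAEClass n c} = ((level n).map Shape.eval).toFinset := by
    ext c
    rw [Set.mem_ofPred_eq, isAEClass_iff_mem_map_eval_level, List.coe_toFinset, Set.mem_ofPred_eq]
  rw [countClasses_eq_ncard_image_mk, image_mk_AEn, hset, Set.ncard_coe_finset,
    List.toFinset_card_of_nodup hnodup, List.length_map]

set_option maxRecDepth 100000 in
theorem levels_five : (levels 5).map List.length = [1, 4, 18, 93, 500, 2844] ∧
    ∀ l ∈ levels 5, (l.map Shape.key).IsChain (· < ·) := by
  decide +kernel

/-- The number `|𝒜̄ₙ|` of isomorphism classes of arithmetic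
expressions with exactly the variables `x₁, …, xₙ` equals `1, 4, 18, 93, 500, 2844` for
`n = 1, 2, 3, 4, 5, 6`. -/
theorem count_classes_small_n :
    countClasses (AEn 1) = 1 ∧ countClasses (AEn 2) = 4 ∧ countClasses (AEn 3) = 18 ∧
    countClasses (AEn 4) = 93 ∧ countClasses (AEn 5) = 500 ∧
    countClasses (AEn 6) = 2844 := by
  obtain ⟨hlength, hchain⟩ := levels_five
  have hcount {n : ℕ} (hn : n ≤ 5) :
      countClasses (AEn (n + 1)) = ((levels 5).map List.length).getD n 0 := by
    have hmem : level n ∈ levels 5 := by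
      rw [← getD_levels hn, List.getD_eq_getElem _ _ (by rw [length_levels]; omega)]
      exact List.getElem_mem _
    rw [countClasses_AEn_eq_length_level (hchain _ hmem), ← getD_levels hn]
    exact (List.getD_map (f := List.length) (d := []) ..).symm
  rw [hlength] at hcount
  exact ⟨hcount (n := 0) (by decide), hcount (n := 1) (by decide), hcount (n := 2) (by decide),
    hcount (n := 3) (by decide), hcount (n := 4) (by decide), hcount (n := 5) (by decide)⟩

end
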